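/- Let 3 ≤ q ≤ m be integers and γ ∈ ℝ. Let K : ℝ^q → ℝ be a location-scale invariant kernel and K_m(x_1,…,x_m) = K(x_{m:m},…,x_{m−q+1:m}). If Z*_1,…,Z*_m are independent standard GP(γ) random variables, then (Z*_{m−q+1:m}, K_m(Z*_1,…,Z*_m)) =_d (Z*_{m−q+1:m}, K((Z_{q−i:q−1})_{i=1}^{q})), where Z_1,…,Z_{q−1} is another independent standard GP(γ) sample independent of the Z*'s and Z_{0:q−1} := 0. In particular, K_m(Z*_1,…,Z*_m) is independent of Z*_{m−q+1:m} and its distribution does not depend on m. -/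

import Mathlib

open MeasureTheory ProbabilityTheory Filter Real Set Topology
open scoped ENNReal NNReal Classical

noncomputable section

/-- The `j`-th largest entry of the tuple `x` (`j = 0` gives the maximum, `j = 1` the
second largest, ...); `0` when `j` is out of range. -/
def descStat {m : ℕ} (x : Fin m → ℝ) (j : ℕ) : ℝ :=
  if h : j < m then (x ∘ Tuple.sort x) ⟨m - 1 - j, by omega⟩ else 0

/-- The kernel of degree `m` obtained from `K` by applying it to the top-`q`
(descending) order statistics: `K_m(x_1,…,x_m) = K(x_{m:m},…,x_{m−q+1:m})`. -/
def Km {q : ℕ} (K : (Fin q → ℝ) → ℝ) (m : ℕ) (x : Fin m → ℝ) : ℝ :=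
  K fun j => descStat x (j : ℕ)

/-- `K(a x_1 + b, …, a x_q + b) = K(x_1, …, x_q)` for all `a > 0`, `b ∈ ℝ`. -/
def LocScaleInvariant {q : ℕ} (K : (Fin q → ℝ) → ℝ) : Prop :=
  ∀ a b : ℝ, 0 < a → ∀ x : Fin q → ℝ, K (fun j => a * x j + b) = K x

/-- `h_γ(y) = (y^γ - 1)/γ`, interpreted as `log y` when `γ = 0`. -/
def hGamma (γ : ℝ) (y : ℝ) : ℝ := if γ = 0 then Real.log y else (y ^ γ - 1) / γ

lemma measurable_hGamma (γ : ℝ) : Measurable (hGamma γ) := by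
  unfold hGamma
  split_ifs
  · exact Real.measurable_log
  · fun_prop

/-- The uniform distribution on `(0,1)`. -/
def unif01 : Measure ℝ := volume.restrict (Set.Ioo (0:ℝ) 1)

instance : IsProbabilityMeasure unif01 := ⟨by simp [unif01]⟩

/-- The standard Pareto(1) distribution, with cdf `1 - 1/y` for `y ≥ 1`. -/
def pareto1 : Measure ℝ := ProbabilityTheory.paretoMeasure 1 1

instance : IsProbabilityMeasure pareto1 :=
  ProbabilityTheory.isProbabilityMeasure_paretoMeasure one_pos one_pos

/-- The standard generalized Pareto distribution `GP(γ)`: the law of `h_γ(Y)` for `Y`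
standard Pareto(1). -/
def gpMeasure (γ : ℝ) : Measure ℝ := pareto1.map (hGamma γ)

instance (γ : ℝ) : IsProbabilityMeasure (gpMeasure γ) :=
  Measure.isProbabilityMeasure_map (measurable_hGamma γ).aemeasurable

/-- The unit exponential distribution: the law of `-log U` for `U` uniform on `(0,1)`. -/
def expMeasure1 : Measure ℝ := unif01.map fun u => -Real.log u

instance : IsProbabilityMeasure expMeasure1 :=
  Measure.isProbabilityMeasure_map Real.measurable_log.neg.aemeasurable

/-- The Erlang(q) distribution: the law of the sum of `q` independent unit exponentials. -/
def erlangMeasure (q : ℕ) : Measure ℝ :=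
  (Measure.pi fun _ : Fin q => expMeasure1).map fun e => ∑ i, e i

instance (q : ℕ) : IsProbabilityMeasure (erlangMeasure q) :=
  Measure.isProbabilityMeasure_map
    (Finset.measurable_sum _ fun i _ => measurable_pi_apply i).aemeasurable

/-- The joint law of `r` iid `GP(γ)` random variables. -/
def gpPi (γ : ℝ) (r : ℕ) : Measure (Fin r → ℝ) := Measure.pi fun _ => gpMeasure γ

instance (γ : ℝ) (r : ℕ) : IsProbabilityMeasure (gpPi γ r) := by
  unfold gpPi; infer_instance

/-- The vector `(Z_{q-j:q-1})_{j=1}^{q}`: the descending order statistics of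
`z_1,…,z_{q-1}` with an extra last entry `Z_{0:q-1} := 0`. -/
def refVec {q : ℕ} (z : Fin (q-1) → ℝ) : Fin q → ℝ := fun j => descStat z (j : ℕ)

/-- `θ = E[K((Z_{q-j:q-1})_{j=1}^{q})]` for iid `GP(γ)` variables `Z_1,…,Z_{q-1}`. -/
def thetaK (γ : ℝ) {q : ℕ} (K : (Fin q → ℝ) → ℝ) : ℝ :=
  ∫ z, K (refVec z) ∂(gpPi γ (q-1))

/-- all moments of `K((Z_{q-j:q-1})_{j=1}^{q})` are finite. -/
def MomentCond (γ : ℝ) {q : ℕ} (K : (Fin q → ℝ) → ℝ) : Prop :=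
  ∀ p : ℝ, 0 < p →
    ∫⁻ z, ENNReal.ofReal (|K (refVec z)| ^ p) ∂(gpPi γ (q-1)) < ⊤

/-- The asymptotic variance
`σ²_K(γ) = ∫_0^∞ (E[K̄_{q+1}((Z_{q-j:q-1})_{j=1}^q, h_γ(S_q/x))])² dx`. -/
def sigmaSqK (γ : ℝ) {q : ℕ} (K : (Fin q → ℝ) → ℝ) : ℝ :=
  ∫ x in Set.Ioi (0:ℝ),
    (∫ zs : (Fin (q-1) → ℝ) × ℝ,
        (Km K (q+1) (Fin.snoc (refVec zs.1) (hGamma γ (zs.2 / x))) - thetaK γ K)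
      ∂((gpPi γ (q-1)).prod (erlangMeasure q))) ^ 2

/-- The U-statistic with kernel `K_m` evaluated on the sample `z`. -/
def UStat {q : ℕ} (K : (Fin q → ℝ) → ℝ) (m n : ℕ) (z : Fin n → ℝ) : ℝ :=
  ((n.choose m : ℝ))⁻¹ *
    ∑ I ∈ Finset.powersetCard m (Finset.univ : Finset (Fin n)),
      Km K I.card fun j => z (I.orderIsoOfFin rfl j).1

/-- Condition on the degree sequence: `m = o(n^{1-ε})` and `log n = o(m^{1-δ})`. -/
def DegreeCond (m : ℕ → ℕ) : Prop :=
  ∃ ε > (0:ℝ), ∃ δ > (0:ℝ),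
    Tendsto (fun n => (m n : ℝ) / (n : ℝ) ^ (1 - ε)) atTop (𝓝 0) ∧
    Tendsto (fun n : ℕ => Real.log n / (m n : ℝ) ^ (1 - δ)) atTop (𝓝 0)

/-- `ζ_{m,ℓ} = cov(K_m(Z_S), K_m(Z_{S'}))` for the blocks `S = [1:m]`,
`S' = [(m-ℓ+1):(2m-ℓ)]` (zero-indexed here), which overlap in `ℓ` indices. -/
def zetaCov {Ω : Type*} [MeasurableSpace Ω] (P : Measure Ω) {q : ℕ}
    (K : (Fin q → ℝ) → ℝ) (Z : ℕ → Ω → ℝ) (m ℓ : ℕ) : ℝ :=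
  (∫ ω, Km K m (fun i : Fin m => Z i ω) * Km K m (fun i : Fin m => Z (m - ℓ + i) ω) ∂P)
    - (∫ ω, Km K m (fun i : Fin m => Z i ω) ∂P)
      * (∫ ω, Km K m (fun i : Fin m => Z (m - ℓ + i) ω) ∂P)

/-- Convergence in distribution to a Gaussian, expressed via pointwise convergence of
the cumulative distribution functions (the Gaussian cdf being continuous). -/
def TendstoGaussian {Ω : Type*} [MeasurableSpace Ω] (P : Measure Ω)
    (T : ℕ → Ω → ℝ) (μ : ℝ) (v : ℝ≥0) : Prop :=
  ∀ x : ℝ, Tendsto (fun n => (P {ω | T n ω ≤ x}).toReal) atTop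
    (𝓝 ((gaussianReal μ v (Set.Iic x)).toReal))

/-- Convergence in probability to the constant `c`. -/
def TendstoInProb {Ω : Type*} [MeasurableSpace Ω] (P : Measure Ω)
    (T : ℕ → Ω → ℝ) (c : ℝ) : Prop :=
  ∀ ε : ℝ, 0 < ε → Tendsto (fun n => (P {ω | ε ≤ |T n ω - c|}).toReal) atTop (𝓝 0)



lemma descStat_of_mono {n : ℕ} {x : Fin n → ℝ} (hx : Monotone x) (j : ℕ) (hj : j < n) :
    descStat x j = x ⟨n - 1 - j, by omega⟩ := by
  unfold descStat
  rw [dif_pos hj, Tuple.sort_eq_refl_iff_monotone.2 hx]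
  rfl

lemma descStat_perm {n : ℕ} (x : Fin n → ℝ) (σ : Equiv.Perm (Fin n)) (j : ℕ) :
    descStat (x ∘ σ) j = descStat x j := by
  unfold descStat
  rw [Tuple.comp_perm_comp_sort_eq_comp_sort]

lemma measurableSet_mono {n : ℕ} (σ : Equiv.Perm (Fin n)) :
    MeasurableSet {x : Fin n → ℝ | Monotone (x ∘ σ)} := by
  have : {x : Fin n → ℝ | Monotone (x ∘ σ)} =
      ⋂ i : Fin n, ⋂ j : Fin n, ⋂ _ : i ≤ j, {x | x (σ i) ≤ x (σ j)} := by
    ext x; simp [Monotone]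
  rw [this]
  refine MeasurableSet.iInter fun i => MeasurableSet.iInter fun j => MeasurableSet.iInter fun _ => ?_
  exact measurableSet_le (measurable_pi_apply _) (measurable_pi_apply _)

lemma measurableSet_smono {n : ℕ} (σ : Equiv.Perm (Fin n)) :
    MeasurableSet {x : Fin n → ℝ | StrictMono (x ∘ σ)} := by
  have : {x : Fin n → ℝ | StrictMono (x ∘ σ)} =
      ⋂ i : Fin n, ⋂ j : Fin n, ⋂ _ : i < j, {x | x (σ i) < x (σ j)} := by
    ext x; simp [StrictMono]
  rw [this]
  refine MeasurableSet.iInter fun i => MeasurableSet.iInter fun j => MeasurableSet.iInter fun _ => ?_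
  exact measurableSet_lt (measurable_pi_apply _) (measurable_pi_apply _)

lemma measurable_descStat {n : ℕ} (j : ℕ) : Measurable (fun x : Fin n → ℝ => descStat x j) := by
  by_cases h : j < n
  · intro s hs
    have : (fun x : Fin n → ℝ => descStat x j) ⁻¹' s =
        ⋃ σ : Equiv.Perm (Fin n), {x | Monotone (x ∘ σ)} ∩ {x | x (σ ⟨n - 1 - j, by omega⟩) ∈ s} := by
      ext x
      simp only [mem_preimage, mem_iUnion, mem_inter_iff, mem_ofPred_eq]
      constructor
      · intro hx
        refine ⟨Tuple.sort x, Tuple.monotone_sort x, ?_⟩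
        simpa [descStat, h] using hx
      · rintro ⟨σ, h1, h2⟩
        rw [← descStat_perm x σ, descStat_of_mono h1 j h]
        exact h2
    rw [this]
    refine MeasurableSet.iUnion fun σ => (measurableSet_mono σ).inter ?_
    exact measurable_pi_apply _ hs
  · have : (fun x : Fin n → ℝ => descStat x j) = fun _ => 0 := by
      ext x; simp [descStat, h]
    rw [this]; exact measurable_const

lemma ae_inj {n : ℕ} (μ : Measure ℝ) [IsProbabilityMeasure μ] [NullSingletonClass μ] :
    ∀ᵐ x ∂(Measure.pi fun _ : Fin n => μ), Function.Injective x := by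
  have key : ∀ i j : Fin n, i ≠ j → ∀ᵐ x ∂(Measure.pi fun _ : Fin n => μ), x i ≠ x j := by
    intro i j hij
    have hind := (iIndepFun_pi (μ := fun _ : Fin n => μ) (X := fun _ => id)
      (fun _ => aemeasurable_id)).indepFun hij
    have := (indepFun_iff_map_prod_eq_prod_map_map
      (measurable_pi_apply i).aemeasurable (measurable_pi_apply j).aemeasurable).1 hind
    have hev : ∀ k : Fin n, Measure.map (fun x : Fin n → ℝ => x k) (Measure.pi fun _ : Fin n => μ) = μ :=
      fun k => (measurePreserving_eval (fun _ : Fin n => μ) k).map_eq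
    erw [hev, hev] at this
    have hd : (μ.prod μ) {p : ℝ × ℝ | p.1 = p.2} = 0 := by
      rw [Measure.prod_apply (measurableSet_eq_fun measurable_fst measurable_snd)]
      have : ∀ x : ℝ, Prod.mk x ⁻¹' {p : ℝ × ℝ | p.1 = p.2} = {x} := by
        intro x; ext y; simp [eq_comm]
      simp [this]
    rw [← this, Measure.map_apply (by fun_prop)
      (measurableSet_eq_fun measurable_fst measurable_snd)] at hd
    rw [ae_iff]
    simpa using hd
  have : ∀ᵐ x ∂(Measure.pi fun _ : Fin n => μ), ∀ i j : Fin n, i ≠ j → x i ≠ x j := by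
    simp only [ae_all_iff]
    intro i j
    by_cases h : i = j
    · simp [h]
    · simpa [h] using key i j h
  filter_upwards [this] with x hx i j hij
  by_contra h
  exact hx i j h hij

lemma pi_symm {n : ℕ} (μ : Measure ℝ) [IsProbabilityMeasure μ] [NullSingletonClass μ]
    (S : Set (Fin n → ℝ)) (hS : MeasurableSet S)
    (hinv : ∀ (σ : Equiv.Perm (Fin n)) x, x ∘ σ ∈ S ↔ x ∈ S) :
    (Measure.pi fun _ : Fin n => μ) S =
      (n.factorial : ℝ≥0∞) * (Measure.pi fun _ : Fin n => μ) (S ∩ {x | StrictMono x}) := by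
  set ρ := Measure.pi fun _ : Fin n => μ with hρ
  have hpres : ∀ σ : Equiv.Perm (Fin n), ρ.map (fun x => x ∘ σ) = ρ := by
    intro σ
    symm
    refine Measure.pi_eq fun s hs => ?_
    rw [Measure.map_apply (by fun_prop) (MeasurableSet.univ_pi hs)]
    have : (fun x : Fin n → ℝ => x ∘ σ) ⁻¹' (univ.pi s) = univ.pi (fun i => s (σ.symm i)) := by
      ext x
      simp only [mem_preimage, Set.mem_pi, mem_univ, true_imp_iff, Function.comp]
      constructor
      · intro h i; simpa using h (σ.symm i)
      · intro h i; simpa using h (σ i)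
    rw [this, hρ, Measure.pi_pi]
    exact Equiv.prod_comp σ.symm (fun i => μ (s i))
  have hSm : MeasurableSet {x : Fin n → ℝ | StrictMono x} := measurableSet_smono (Equiv.refl _)
  have h1 : ρ S = ρ (⋃ σ : Equiv.Perm (Fin n), S ∩ {x | StrictMono (x ∘ σ)}) := by
    apply measure_congr
    filter_upwards [ae_inj (n := n) μ] with x hx
    apply propext
    change x ∈ S ↔ x ∈ ⋃ σ : Equiv.Perm (Fin n), S ∩ {x | StrictMono (x ∘ σ)}
    simp only [mem_iUnion, mem_inter_iff, mem_ofPred_eq]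
    constructor
    · intro h
      exact ⟨Tuple.sort x, h, (Tuple.monotone_sort x).strictMono_of_injective
        (hx.comp (Tuple.sort x).injective)⟩
    · rintro ⟨σ, h, _⟩; exact h
  rw [h1, measure_iUnion]
  · rw [tsum_fintype]
    have : ∀ σ : Equiv.Perm (Fin n), ρ (S ∩ {x | StrictMono (x ∘ σ)}) = ρ (S ∩ {x | StrictMono x}) := by
      intro σ
      conv_rhs => rw [← hpres σ]
      rw [Measure.map_apply (by fun_prop) (hS.inter hSm)]
      congr 1
      ext x
      simp [hinv]
    simp [this, Fintype.card_perm]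
  · intro σ τ hστ
    rw [Function.onFun, Set.disjoint_left]
    rintro x ⟨_, h1⟩ ⟨_, h2⟩
    apply hστ
    have := Tuple.unique_monotone h1.monotone h2.monotone
    have hx : Function.Injective x := by
      have := h1.injective.comp σ.symm.injective
      simpa [Function.comp_assoc] using this
    ext i
    exact congrArg _ (hx (congrFun this i))
  · intro σ
    exact hS.inter (measurableSet_smono σ)

lemma pi_tail {r : ℕ} (μ : Measure ℝ) [IsProbabilityMeasure μ] (t σ : ℝ)
    (h : μ.restrict (Ioi t) = μ (Ioi t) • μ.map (fun z => t + σ * z))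
    (S : Set (Fin r → ℝ)) (hS : MeasurableSet S) :
    (Measure.pi fun _ : Fin r => μ) (S ∩ {x | ∀ i, t < x i}) =
      μ (Ioi t) ^ r * (Measure.pi fun _ : Fin r => μ) {z | (fun i => t + σ * z i) ∈ S} := by
  have hm : Measurable (fun (z : Fin r → ℝ) (i : Fin r) => t + σ * z i) := by fun_prop
  have hset : {x : Fin r → ℝ | ∀ i, t < x i} = univ.pi fun _ => Ioi t := by
    ext x; simp
  have e : (Measure.pi fun _ : Fin r => μ.restrict (Ioi t)) =
      (μ (Ioi t) ^ r) • (Measure.pi fun _ : Fin r => μ).map (fun z i => t + σ * z i) := by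
    refine Measure.pi_eq fun s hs => ?_
    rw [h, Measure.smul_apply, Measure.map_apply hm (MeasurableSet.univ_pi hs)]
    have : (fun (z : Fin r → ℝ) (i : Fin r) => t + σ * z i) ⁻¹' (univ.pi s) =
        univ.pi fun i => (fun z => t + σ * z) ⁻¹' (s i) := by
      ext x; simp
    rw [this, Measure.pi_pi]
    simp only [Measure.smul_apply, smul_eq_mul, Finset.prod_mul_distrib, Finset.prod_const,
      Finset.card_univ, Fintype.card_fin]
    congr 1
    refine Finset.prod_congr rfl fun i _ => ?_
    rw [Measure.map_apply (by fun_prop) (hs i)]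
  rw [hset, ← Measure.restrict_apply hS, Measure.restrict_pi_pi, e, Measure.smul_apply,
    Measure.map_apply hm hS]
  rfl

lemma pareto1_Ici {a : ℝ} (ha : 1 ≤ a) : pareto1 (Ici a) = ENNReal.ofReal (a⁻¹) := by
  rw [pareto1, paretoMeasure, withDensity_apply _ measurableSet_Ici]
  have : ∫⁻ x in Ici a, paretoPDF 1 1 x = ∫⁻ x in Ici a, ENNReal.ofReal (x ^ (-2 : ℝ)) := by
    refine setLIntegral_congr_fun measurableSet_Ici fun x hx => ?_
    have hx' : a ≤ x := hx
    rw [paretoPDF_of_le (by linarith)]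
    norm_num
  rw [this, setLIntegral_congr Ioi_ae_eq_Ici.symm, ← ofReal_integral_eq_lintegral_ofReal]
  · rw [integral_Ioi_rpow_of_lt (by norm_num) (by linarith)]
    congr 1
    norm_num
    rw [Real.rpow_neg_one]
  · exact integrableOn_Ioi_rpow_of_lt (by norm_num) (by linarith)
  · filter_upwards [ae_restrict_mem measurableSet_Ioi] with x hx
    have hx' : a < x := hx
    exact Real.rpow_nonneg (by linarith) _

instance : NullSingletonClass pareto1 := by
  unfold pareto1 paretoMeasure; infer_instance

lemma pareto1_ae : ∀ᵐ y ∂pareto1, 1 ≤ y := by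
  rw [ae_iff, ← prob_compl_eq_one_iff]
  · have := pareto1_Ici (le_refl 1)
    have h2 : {y : ℝ | ¬ 1 ≤ y}ᶜ = Ici 1 := by ext y; simp
    rw [h2]
    simpa using this
  · simp only [not_le]; exact measurableSet_Iio

lemma pareto1_Ici' (a : ℝ) : pareto1 (Ici a) = ENNReal.ofReal ((max a 1)⁻¹) := by
  rcases le_total 1 a with h | h
  · rw [pareto1_Ici h, max_eq_left h]
  · rw [max_eq_right h]
    have : pareto1 (Ici a) = pareto1 (Ici 1) := by
      apply measure_congr
      filter_upwards [pareto1_ae] with y hy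
      apply propext
      change a ≤ y ↔ 1 ≤ y
      exact ⟨fun _ => hy, fun _ => h.trans hy⟩
    rw [this, pareto1_Ici le_rfl]

lemma pareto1_tail {s : ℝ} (hs : 1 ≤ s) :
    pareto1.restrict (Ioi s) = pareto1 (Ioi s) • pareto1.map (fun y => s * y) := by
  have hs0 : 0 < s := by linarith
  have hc : pareto1 (Ioi s) = ENNReal.ofReal s⁻¹ := by
    rw [← pareto1_Ici hs]; exact measure_congr Ioi_ae_eq_Ici
  have : IsFiniteMeasure (pareto1 (Ioi s) • pareto1.map (fun y => s * y)) := by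
    refine ⟨?_⟩
    rw [Measure.smul_apply, smul_eq_mul]
    exact ENNReal.mul_lt_top (measure_lt_top _ _) (measure_lt_top _ _)
  refine Measure.ext_of_Ici _ _ fun a => ?_
  rw [Measure.restrict_apply measurableSet_Ici, Measure.smul_apply,
    Measure.map_apply (by fun_prop) measurableSet_Ici, hc]
  have h1 : pareto1 (Ici a ∩ Ioi s) = pareto1 (Ici (max a s)) := by
    rw [← Ici_inter_Ici]
    exact measure_congr ((ae_eq_refl _).inter Ioi_ae_eq_Ici)
  have h2 : (fun y => s * y) ⁻¹' (Ici a) = Ici (a / s) := by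
    ext y; simp [div_le_iff₀' hs0]
  rw [h1, h2, pareto1_Ici', pareto1_Ici', smul_eq_mul, ← ENNReal.ofReal_mul (by positivity)]
  congr 1
  rw [← mul_inv, mul_max_of_nonneg _ _ hs0.le, mul_div_cancel₀ _ hs0.ne', mul_one]
  congr 1
  rw [max_assoc, max_eq_left hs]

lemma hGamma_mul (γ : ℝ) {s y : ℝ} (hs : 0 < s) (hy : 0 < y) :
    hGamma γ (s * y) = hGamma γ s + s ^ γ * hGamma γ y := by
  unfold hGamma
  split_ifs with h
  · rw [h, Real.log_mul hs.ne' hy.ne']; simp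
  · rw [Real.mul_rpow hs.le hy.le]; field_simp; ring

lemma hGamma_strictMono (γ : ℝ) : StrictMonoOn (hGamma γ) (Ioi 0) := by
  intro x hx y hy hxy
  have hx : 0 < x := hx
  have hy : 0 < y := hy
  unfold hGamma
  split_ifs with h
  · exact Real.log_lt_log hx hxy
  · rcases lt_or_gt_of_ne h with h | h
    · apply div_lt_div_of_neg_of_lt h
      have := Real.rpow_lt_rpow_of_neg hx hxy h
      linarith
    · apply div_lt_div_of_pos_right _ h
      have := Real.rpow_lt_rpow hx.le hxy h
      linarith

instance (γ : ℝ) : NullSingletonClass (gpMeasure γ) := by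
  refine ⟨fun t => ?_⟩
  rw [gpMeasure, Measure.map_apply (measurable_hGamma γ) (measurableSet_singleton t)]
  have : pareto1 (hGamma γ ⁻¹' {t}) = pareto1 (hGamma γ ⁻¹' {t} ∩ Ici 1) := by
    apply measure_congr
    filter_upwards [pareto1_ae] with y hy
    apply propext
    exact ⟨fun h => ⟨h, hy⟩, fun h => h.1⟩
  rw [this]
  apply Set.Subsingleton.measure_zero
  rintro x ⟨hx, hx1⟩ y ⟨hy, hy1⟩
  have hx1 : 1 ≤ x := hx1
  have hy1 : 1 ≤ y := hy1
  refine (hGamma_strictMono γ).injOn (show 0 < x by linarith) (show 0 < y by linarith) ?_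
  rw [show hGamma γ x = t from hx, show hGamma γ y = t from hy]

lemma gp_tail (γ : ℝ) : ∀ᵐ t ∂(gpMeasure γ), ∃ σ : ℝ, 0 < σ ∧
    (gpMeasure γ).restrict (Ioi t) =
      gpMeasure γ (Ioi t) • (gpMeasure γ).map (fun z => t + σ * z) := by
  have hh := measurable_hGamma γ
  have hinj : InjOn (hGamma γ) (Ici 1) := (hGamma_strictMono γ).injOn.mono
    fun x (hx : 1 ≤ x) => (show 0 < x by linarith)
  have hmem : ∀ᵐ t ∂(gpMeasure γ), t ∈ hGamma γ '' Ici 1 := by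
    refine (ae_map_iff hh.aemeasurable
      (measurableSet_Ici.image_of_measurable_injOn hh hinj)).2 ?_
    filter_upwards [pareto1_ae] with s hs
    exact ⟨s, hs, rfl⟩
  filter_upwards [hmem] with t ht
  obtain ⟨s, hs, rfl⟩ := ht
  have hs : 1 ≤ s := hs
  have hs0 : 0 < s := by linarith
  refine ⟨s ^ γ, by positivity, ?_⟩
  have hset : (hGamma γ ⁻¹' Ioi (hGamma γ s) : Set ℝ) =ᵐ[pareto1] Ioi s := by
    filter_upwards [pareto1_ae] with y hy
    apply propext
    change hGamma γ s < hGamma γ y ↔ s < y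
    exact (hGamma_strictMono γ).lt_iff_lt hs0 (show 0 < y by linarith)
  have hlin : Measurable fun z : ℝ => hGamma γ s + s ^ γ * z := by fun_prop
  rw [gpMeasure, Measure.restrict_map hh measurableSet_Ioi, Measure.map_apply hh measurableSet_Ioi,
    Measure.restrict_congr_set hset, measure_congr hset, pareto1_tail hs, Measure.map_smul,
    Measure.map_map hh (by fun_prop), Measure.map_map hlin hh]
  congr 1
  apply Measure.map_congr
  filter_upwards [pareto1_ae] with y hy
  exact hGamma_mul γ hs0 (by linarith)

/-- Glue the lower part `u`, the threshold `t` and the upper part `z`. -/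
def glue {p r : ℕ} (w : ℝ × (Fin p → ℝ) × (Fin r → ℝ)) : Fin (p + 1 + r) → ℝ :=
  Fin.append (Fin.snoc w.2.1 w.1 : Fin (p + 1) → ℝ) w.2.2

lemma glue_low {p r : ℕ} (w : ℝ × (Fin p → ℝ) × (Fin r → ℝ)) (i : Fin p) :
    glue w (Fin.castAdd r (Fin.castSucc i)) = w.2.1 i := by
  unfold glue
  rw [Fin.append_left, Fin.snoc_castSucc (α := fun _ => ℝ)]

lemma glue_mid {p r : ℕ} (w : ℝ × (Fin p → ℝ) × (Fin r → ℝ)) :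
    glue w (Fin.castAdd r (Fin.last p)) = w.1 := by
  unfold glue
  rw [Fin.append_left, Fin.snoc_last (α := fun _ => ℝ)]

lemma glue_high {p r : ℕ} (w : ℝ × (Fin p → ℝ) × (Fin r → ℝ)) (i : Fin r) :
    glue w (Fin.natAdd (p + 1) i) = w.2.2 i := by
  unfold glue
  rw [Fin.append_right]

lemma forall_glue {p r : ℕ} (Q : Fin (p + 1 + r) → Prop) :
    (∀ i, Q i) ↔ Q (Fin.castAdd r (Fin.last p)) ∧ (∀ i, Q (Fin.castAdd r (Fin.castSucc i))) ∧
      (∀ i, Q (Fin.natAdd (p + 1) i)) := by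
  constructor
  · intro h; exact ⟨h _, fun i => h _, fun i => h _⟩
  · rintro ⟨h1, h2, h3⟩ i
    refine Fin.addCases (fun j => ?_) h3 i
    refine Fin.lastCases h1 h2 j

lemma measurable_glue {p r : ℕ} : Measurable (glue (p := p) (r := r)) := by
  rw [measurable_pi_iff]
  rw [forall_glue]
  refine ⟨?_, fun i => ?_, fun i => ?_⟩
  · simp only [glue_mid]; fun_prop
  · simp only [glue_low]; fun_prop
  · simp only [glue_high]; fun_prop

lemma map_glue {p r : ℕ} (μ : Measure ℝ) [IsProbabilityMeasure μ] :
    (μ.prod ((Measure.pi fun _ : Fin p => μ).prod (Measure.pi fun _ : Fin r => μ))).map glue =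
      Measure.pi fun _ : Fin (p + 1 + r) => μ := by
  symm
  refine Measure.pi_eq fun s hs => ?_
  rw [Measure.map_apply measurable_glue (MeasurableSet.univ_pi hs)]
  have : glue ⁻¹' (univ.pi s) = s (Fin.castAdd r (Fin.last p)) ×ˢ
      ((univ.pi fun i : Fin p => s (Fin.castAdd r (Fin.castSucc i))) ×ˢ
        (univ.pi fun i : Fin r => s (Fin.natAdd (p + 1) i))) := by
    ext w
    simp only [mem_preimage, Set.mem_pi, mem_univ, true_imp_iff, mem_prod]
    rw [forall_glue]
    simp only [glue_low, glue_mid, glue_high]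
  rw [this, Measure.prod_prod, Measure.prod_prod, Measure.pi_pi, Measure.pi_pi,
    Fin.prod_univ_add, Fin.prod_univ_castSucc]
  ring

lemma strictMono_glue {p r : ℕ} (w : ℝ × (Fin p → ℝ) × (Fin r → ℝ)) :
    StrictMono (glue w) ↔ StrictMono (Fin.snoc w.2.1 w.1 : Fin (p + 1) → ℝ) ∧
      StrictMono w.2.2 ∧ ∀ i, w.1 < w.2.2 i := by
  constructor
  · intro h
    refine ⟨?_, ?_, ?_⟩
    · intro i j hij
      have := h (show Fin.castAdd r i < Fin.castAdd r j from hij)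
      simpa [glue] using this
    · intro i j hij
      have := h (show Fin.natAdd (p + 1) i < Fin.natAdd (p + 1) j by simpa using hij)
      simpa [glue_high] using this
    · intro i
      have := h (show Fin.castAdd r (Fin.last p) < Fin.natAdd (p + 1) i by
        rw [Fin.lt_def]; simp; omega)
      simpa [glue_mid, glue_high] using this
  · rintro ⟨h1, h2, h3⟩
    have h4 : ∀ i, (Fin.snoc w.2.1 w.1 : Fin (p + 1) → ℝ) i ≤ w.1 := by
      intro i
      have := h1.monotone (Fin.le_last i)
      rwa [Fin.snoc_last (α := fun _ => ℝ)] at this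
    intro i j
    refine Fin.addCases (fun i => ?_) (fun i => ?_) i <;>
    refine Fin.addCases (fun j => ?_) (fun j => ?_) j <;> intro hij
    · simp only [glue, Fin.append_left]; exact h1 hij
    · simp only [glue, Fin.append_left, Fin.append_right]; exact (h4 i).trans_lt (h3 j)
    · exfalso; rw [Fin.lt_def] at hij; simp at hij; omega
    · simp only [glue, Fin.append_right]; exact h2 (by simpa using hij)

lemma descStat_glue_mid {p r : ℕ} (w : ℝ × (Fin p → ℝ) × (Fin r → ℝ))
    (h : StrictMono (glue w)) : descStat (glue w) r = w.1 := by
  rw [descStat_of_mono h.monotone r (by omega), ← glue_mid w]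
  congr 1
  ext; simp

lemma descStat_glue_high {p r : ℕ} (w : ℝ × (Fin p → ℝ) × (Fin r → ℝ))
    (h : StrictMono (glue w)) (j : ℕ) (hj : j < r) :
    descStat (glue w) j = descStat w.2.2 j := by
  rw [descStat_of_mono h.monotone j (by omega),
    descStat_of_mono ((strictMono_glue w).1 h).2.1.monotone j hj, ← glue_high w]
  congr 1
  ext; simp; omega

/-- The top vector formed from the upper part `z` and threshold `t`. -/
def topVec {r : ℕ} (t : ℝ) (z : Fin r → ℝ) : Fin (r + 1) → ℝ :=
  fun j => if (j : ℕ) < r then descStat z j else t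

lemma descStat_glue {p r : ℕ} (w : ℝ × (Fin p → ℝ) × (Fin r → ℝ))
    (h : StrictMono (glue w)) :
    (fun j : Fin (r + 1) => descStat (glue w) (j : ℕ)) = topVec w.1 w.2.2 := by
  ext j
  unfold topVec
  split_ifs with hj
  · exact descStat_glue_high w h j hj
  · rw [show (j : ℕ) = r by omega, descStat_glue_mid w h]

lemma measurable_topVec {r : ℕ} (t : ℝ) : Measurable (topVec (r := r) t) := by
  rw [measurable_pi_iff]
  intro j
  unfold topVec
  split_ifs
  · exact measurable_descStat _
  · exact measurable_const

lemma topVec_affine {r : ℕ} (t σ : ℝ) (z : Fin r → ℝ) (hσ : 0 < σ) (hz : StrictMono z) :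
    topVec t (fun i => t + σ * z i) = fun j : Fin (r + 1) => σ * (descStat z (j : ℕ)) + t := by
  have hz' : StrictMono (fun i => t + σ * z i) := fun i j hij => by
    have := mul_lt_mul_of_pos_left (hz hij) hσ
    simp only; linarith
  ext j
  unfold topVec
  split_ifs with hj
  · rw [descStat_of_mono hz'.monotone _ hj, descStat_of_mono hz.monotone _ hj]; ring
  · simp [descStat, hj]

lemma strictMono_affine {r : ℕ} (t σ : ℝ) (z : Fin r → ℝ) (hσ : 0 < σ) :
    StrictMono (fun i => t + σ * z i) ↔ StrictMono z := by
  simp [StrictMono, hσ]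

/-- Probability that the lower part is sorted below `t`, with an indicator for `t ∈ A`. -/
def wt (μ : Measure ℝ) (p r : ℕ) (A : Set ℝ) (t : ℝ) : ℝ≥0∞ :=
  (Measure.pi fun _ : Fin p => μ)
    {u | StrictMono (Fin.snoc u t : Fin (p + 1) → ℝ) ∧ t ∈ A} * μ (Ioi t) ^ r

lemma core_sorted {p r : ℕ} (μ : Measure ℝ) [IsProbabilityMeasure μ]
    (htail : ∀ᵐ t ∂μ, ∃ σ : ℝ, 0 < σ ∧
      μ.restrict (Ioi t) = μ (Ioi t) • μ.map (fun z => t + σ * z))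
    (K : (Fin (r + 1) → ℝ) → ℝ) (hK : Measurable K) (hLS : LocScaleInvariant K)
    {A B : Set ℝ} (hA : MeasurableSet A) (hB : MeasurableSet B) :
    (Measure.pi fun _ : Fin (p + 1 + r) => μ)
      ({x | descStat x r ∈ A ∧ Km K _ x ∈ B} ∩ {x | StrictMono x}) =
    (∫⁻ t, wt μ p r A t ∂μ) * (Measure.pi fun _ : Fin r => μ)
      ({z | K (fun j => descStat z (j : ℕ)) ∈ B} ∩ {z | StrictMono z}) := by
  have hKm : Measurable (fun x : Fin (p + 1 + r) → ℝ => Km K _ x) := by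
    unfold Km
    exact hK.comp (measurable_pi_iff.2 fun j => measurable_descStat _)
  have hS : MeasurableSet ({x : Fin (p + 1 + r) → ℝ | descStat x r ∈ A ∧ Km K _ x ∈ B} ∩
      {x | StrictMono x}) :=
    (((measurable_descStat r) hA).inter (hKm hB)).inter (measurableSet_smono (Equiv.refl _))
  rw [← map_glue, Measure.map_apply measurable_glue hS,
    Measure.prod_apply (measurable_glue hS), ← lintegral_mul_const' _ _ (measure_ne_top _ _)]
  apply lintegral_congr_ae
  filter_upwards [htail] with t ht
  obtain ⟨σ, hσ, ht⟩ := ht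
  have hsec : Prod.mk t ⁻¹' (glue ⁻¹' ({x : Fin (p + 1 + r) → ℝ | descStat x r ∈ A ∧ Km K _ x ∈ B} ∩
      {x | StrictMono x})) =
      {u : Fin p → ℝ | StrictMono (Fin.snoc u t : Fin (p + 1) → ℝ) ∧ t ∈ A} ×ˢ
      (({z : Fin r → ℝ | K (topVec t z) ∈ B} ∩ {z | StrictMono z}) ∩ {z | ∀ i, t < z i}) := by
    ext ⟨u, z⟩
    change ((descStat (glue (t, u, z)) r ∈ A ∧
      K (fun j : Fin (r + 1) => descStat (glue (t, u, z)) (j : ℕ)) ∈ B) ∧ StrictMono (glue (t, u, z))) ↔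
      ((StrictMono (Fin.snoc u t : Fin (p + 1) → ℝ) ∧ t ∈ A) ∧
        ((K (topVec t z) ∈ B ∧ StrictMono z) ∧ ∀ i, t < z i))
    constructor
    · rintro ⟨⟨h1, h2⟩, h3⟩
      rw [descStat_glue_mid _ h3] at h1
      rw [descStat_glue _ h3] at h2
      have := (strictMono_glue _).1 h3
      exact ⟨⟨this.1, h1⟩, ⟨h2, this.2.1⟩, this.2.2⟩
    · rintro ⟨⟨h1, h2⟩, ⟨h3, h4⟩, h5⟩
      have h : StrictMono (glue (t, u, z)) := (strictMono_glue _).2 ⟨h1, h4, h5⟩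
      rw [descStat_glue_mid _ h, descStat_glue _ h]
      exact ⟨⟨h2, h3⟩, h⟩
  rw [hsec, Measure.prod_prod, pi_tail μ t σ ht ({z : Fin r → ℝ | K (topVec t z) ∈ B} ∩ {z | StrictMono z})
    (((hK.comp (measurable_topVec t)) hB).inter (measurableSet_smono (Equiv.refl _))), wt, mul_assoc]
  congr 3
  ext z
  change (K (topVec t fun i => t + σ * z i) ∈ B ∧ StrictMono (fun i => t + σ * z i)) ↔
    (K (fun j => descStat z (j : ℕ)) ∈ B ∧ StrictMono z)
  rw [strictMono_affine _ _ _ hσ]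
  refine and_congr_left fun hz => ?_
  rw [topVec_affine _ _ _ hσ hz, hLS σ t hσ]

lemma core_prod {p r : ℕ} (μ : Measure ℝ) [IsProbabilityMeasure μ] [NullSingletonClass μ]
    (htail : ∀ᵐ t ∂μ, ∃ σ : ℝ, 0 < σ ∧
      μ.restrict (Ioi t) = μ (Ioi t) • μ.map (fun z => t + σ * z))
    (K : (Fin (r + 1) → ℝ) → ℝ) (hK : Measurable K) (hLS : LocScaleInvariant K) :
    (Measure.pi fun _ : Fin (p + 1 + r) => μ).map (fun x => (descStat x r, Km K _ x)) =
    ((Measure.pi fun _ : Fin (p + 1 + r) => μ).map (fun x => descStat x r)).prod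
      ((Measure.pi fun _ : Fin r => μ).map (fun z => K (fun j => descStat z (j : ℕ)))) := by
  have hKm : Measurable (fun x : Fin (p + 1 + r) → ℝ => Km K _ x) := by
    unfold Km
    exact hK.comp (measurable_pi_iff.2 fun j => measurable_descStat _)
  have hR : Measurable (fun z : Fin r → ℝ => K (fun j => descStat z (j : ℕ))) :=
    hK.comp (measurable_pi_iff.2 fun j => measurable_descStat _)
  have hD : Measurable (fun x : Fin (p + 1 + r) → ℝ => descStat x r) := measurable_descStat r
  have key : ∀ A B : Set ℝ, MeasurableSet A → MeasurableSet B →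
      (Measure.pi fun _ : Fin (p + 1 + r) => μ) {x | descStat x r ∈ A ∧ Km K _ x ∈ B} =
      ((p + 1 + r).factorial * (∫⁻ t, wt μ p r A t ∂μ) * (r.factorial : ℝ≥0∞)⁻¹) *
        (Measure.pi fun _ : Fin r => μ) {z | K (fun j => descStat z (j : ℕ)) ∈ B} := by
    intro A B hA hB
    rw [pi_symm μ {x : Fin (p + 1 + r) → ℝ | descStat x r ∈ A ∧ Km K _ x ∈ B} ((hD hA).inter (hKm hB)) (by
      intro σ x
      change (descStat (x ∘ σ) r ∈ A ∧ K (fun j => descStat (x ∘ σ) (j : ℕ)) ∈ B) ↔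
        (descStat x r ∈ A ∧ K (fun j => descStat x (j : ℕ)) ∈ B)
      simp only [descStat_perm])]
    rw [pi_symm μ {z : Fin r → ℝ | K (fun j => descStat z (j : ℕ)) ∈ B} (hR hB) (by
      intro σ x
      change (K (fun j => descStat (x ∘ σ) (j : ℕ)) ∈ B) ↔
        (K (fun j => descStat x (j : ℕ)) ∈ B)
      simp only [descStat_perm])]
    have hc := core_sorted (p := p) μ htail K hK hLS hA hB
    have h0 : (r.factorial : ℝ≥0∞)⁻¹ * r.factorial = 1 :=
      ENNReal.inv_mul_cancel (by exact_mod_cast r.factorial_ne_zero) (by simp)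
    refine (congrArg _ hc).trans ?_
    rw [mul_assoc _ (r.factorial : ℝ≥0∞)⁻¹, ← mul_assoc (r.factorial : ℝ≥0∞)⁻¹, h0, one_mul, mul_assoc]
  symm
  have := Measure.isProbabilityMeasure_map (μ := Measure.pi fun _ : Fin (p + 1 + r) => μ) hD.aemeasurable
  have := Measure.isProbabilityMeasure_map (μ := Measure.pi fun _ : Fin r => μ) hR.aemeasurable
  refine Measure.prod_eq fun A B hA hB => ?_
  rw [Measure.map_apply (hD.prodMk hKm) (hA.prod hB), Measure.map_apply hD hA,
    Measure.map_apply hR hB]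
  refine (key A B hA hB).trans ?_
  congr 1
  have h2 := key A univ hA MeasurableSet.univ
  simp only [mem_univ, and_true] at h2
  have h3 : (Measure.pi fun _ : Fin r => μ) {z : Fin r → ℝ | True} = 1 := by
    have : {z : Fin r → ℝ | True} = univ := by ext; simp
    rw [this]; exact measure_univ
  rw [h3, mul_one] at h2
  exact h2.symm

lemma map_sum_pi {a b : ℕ} (μ : Measure ℝ) [IsProbabilityMeasure μ] :
    (Measure.pi fun _ : Fin a ⊕ Fin b => μ).map
      (fun w => ((fun i => w (Sum.inl i) : Fin a → ℝ), (fun i => w (Sum.inr i) : Fin b → ℝ))) =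
    (Measure.pi fun _ : Fin a => μ).prod (Measure.pi fun _ : Fin b => μ) :=
  (measurePreserving_sumPiEquivProdPi (fun _ : Fin a ⊕ Fin b => μ)).map_eq
/-- Lemma: joint law of `(Z*_{m-q+1:m}, K_m(Z*_1,…,Z*_m))`.
For a location-scale invariant kernel `K` and independent standard `GP(γ)` variables,
`(Z*_{m-q+1:m}, K_m(Z*)) =_d (Z*_{m-q+1:m}, K((Z_{q-i:q-1})_{i=1}^q))`; in particular
`K_m(Z*)` is independent of `Z*_{m-q+1:m}` and its law does not depend on `m`. -/
theorem gp_kernel_representation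
    {Ω : Type*} [MeasurableSpace Ω] (P : Measure Ω) [IsProbabilityMeasure P]
    (γ : ℝ) (q m : ℕ) (hq : 3 ≤ q) (hqm : q ≤ m)
    (K : (Fin q → ℝ) → ℝ) (hKmeas : Measurable K)
    (hLS : LocScaleInvariant K)
    (W : (Fin m ⊕ Fin (q - 1)) → Ω → ℝ)
    (hWmeas : ∀ i, Measurable (W i))
    (hIndep : iIndepFun W P)
    (hDist : ∀ i, Measure.map (W i) P = gpMeasure γ) :
    Measure.map
      (fun ω => (descStat (fun a : Fin m => W (Sum.inl a) ω) (q - 1),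
        Km K m (fun a : Fin m => W (Sum.inl a) ω))) P
    = Measure.map
      (fun ω => (descStat (fun a : Fin m => W (Sum.inl a) ω) (q - 1),
        K (refVec (fun a : Fin (q - 1) => W (Sum.inr a) ω)))) P
    ∧ IndepFun
        (fun ω => descStat (fun a : Fin m => W (Sum.inl a) ω) (q - 1))
        (fun ω => Km K m (fun a : Fin m => W (Sum.inl a) ω)) P
    ∧ Measure.map (fun ω => Km K m (fun a : Fin m => W (Sum.inl a) ω)) P
        = Measure.map (fun ω => K (refVec (fun a : Fin (q - 1) => W (Sum.inr a) ω))) P := by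
  obtain ⟨r, rfl⟩ : ∃ r, q = r + 1 := ⟨q - 1, by omega⟩
  obtain ⟨p, rfl⟩ : ∃ p, m = p + 1 + r := ⟨m - (r + 1), by omega⟩
  set μ := gpMeasure γ with hμ
  have hcore := core_prod (p := p) μ (gp_tail γ) K hKmeas hLS
  have hKm : Measurable (fun x : Fin (p + 1 + r) → ℝ => Km K _ x) := by
    unfold Km
    exact hKmeas.comp (measurable_pi_iff.2 fun j => measurable_descStat _)
  have hR : Measurable (fun z : Fin r → ℝ => K (fun j => descStat z (j : ℕ))) :=
    hKmeas.comp (measurable_pi_iff.2 fun j => measurable_descStat _)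
  have hD : Measurable (fun x : Fin (p + 1 + r) → ℝ => descStat x r) := measurable_descStat r
  set X : Ω → Fin (p + 1 + r) → ℝ := fun ω a => W (Sum.inl a) ω with hX
  set Z : Ω → Fin r → ℝ := fun ω a => W (Sum.inr a) ω with hZ
  have hXm : Measurable X := measurable_pi_iff.2 fun a => hWmeas _
  have hZm : Measurable Z := measurable_pi_iff.2 fun a => hWmeas _
  have hjoint : P.map (fun ω => (X ω, Z ω)) =
      (Measure.pi fun _ : Fin (p + 1 + r) => μ).prod (Measure.pi fun _ : Fin r => μ) := by
    have h1 := (iIndepFun_iff_map_fun_eq_pi_map (fun i => (hWmeas i).aemeasurable)).1 hIndep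
    simp only [hDist] at h1
    rw [← map_sum_pi μ]
    erw [← h1]
    rw [Measure.map_map (by fun_prop) (measurable_pi_iff.2 hWmeas)]
    rfl
  have hXlaw : P.map X = Measure.pi fun _ : Fin (p + 1 + r) => μ := by
    have := congrArg (Measure.map Prod.fst) hjoint
    rw [Measure.map_map measurable_fst (hXm.prodMk hZm), Measure.map_fst_prod, measure_univ, one_smul] at this
    exact this
  have hZlaw : P.map Z = Measure.pi fun _ : Fin r => μ := by
    have := congrArg (Measure.map Prod.snd) hjoint
    rw [Measure.map_map measurable_snd (hXm.prodMk hZm), Measure.map_snd_prod, measure_univ, one_smul] at this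
    exact this
  have := Measure.isProbabilityMeasure_map (μ := Measure.pi fun _ : Fin (p + 1 + r) => μ) hD.aemeasurable
  have := Measure.isProbabilityMeasure_map (μ := Measure.pi fun _ : Fin r => μ) hR.aemeasurable
  have e1 : P.map (fun ω => (descStat (X ω) r, Km K _ (X ω))) =
      ((Measure.pi fun _ : Fin (p + 1 + r) => μ).map (fun x => descStat x r)).prod
      ((Measure.pi fun _ : Fin r => μ).map (fun z => K (fun j => descStat z (j : ℕ)))) := by
    rw [← hcore, ← hXlaw, Measure.map_map (hD.prodMk hKm) hXm]
    rfl
  have e2 : P.map (fun ω => (descStat (X ω) r, K (fun j => descStat (Z ω) (j : ℕ)))) =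
      ((Measure.pi fun _ : Fin (p + 1 + r) => μ).map (fun x => descStat x r)).prod
      ((Measure.pi fun _ : Fin r => μ).map (fun z => K (fun j => descStat z (j : ℕ)))) := by
    rw [Measure.map_prod_map _ _ hD hR, ← hjoint,
      Measure.map_map (hD.prodMap hR) (hXm.prodMk hZm)]
    rfl
  have e3 : P.map (fun ω => descStat (X ω) r) =
      (Measure.pi fun _ : Fin (p + 1 + r) => μ).map (fun x => descStat x r) := by
    rw [← hXlaw, Measure.map_map hD hXm]; rfl
  have e4 : P.map (fun ω => Km K _ (X ω)) =
      (Measure.pi fun _ : Fin r => μ).map (fun z => K (fun j => descStat z (j : ℕ))) := by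
    have := congrArg (Measure.map Prod.snd) e1
    have hm : Measurable (fun ω => (descStat (X ω) r, Km K _ (X ω))) :=
      (hD.comp hXm).prodMk (hKm.comp hXm)
    rw [Measure.map_map measurable_snd hm,
      Measure.map_snd_prod, measure_univ, one_smul] at this
    exact this
  have e5 : P.map (fun ω => K (fun j => descStat (Z ω) (j : ℕ))) =
      (Measure.pi fun _ : Fin r => μ).map (fun z => K (fun j => descStat z (j : ℕ))) := by
    rw [← hZlaw, Measure.map_map hR hZm]; rfl
  refine ⟨e1.trans e2.symm, ?_, e4.trans e5.symm⟩
  refine (indepFun_iff_map_prod_eq_prod_map_map (hD.comp hXm).aemeasurable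
    (hKm.comp hXm).aemeasurable).2 ?_
  exact e1.trans (by rw [← e3, ← e4]; rfl)

end
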